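/- arXiv:2407.17428 — 6 statements merged into one kernel-verified Lean document; each statement's English description precedes it below -/
import Mathlib

section
/- Assume additionally θ_L > β_H·θ_H, and let I_L', I_H' > I_r1 be the actual performances delivered by the low- and high-type AIGC models. Then the high-contract utility is smaller than the low-contract utility, i.e. U_W(θ_H, I_H', p_H*) < U_W(θ_L, I_L', p_L*), if and only if η_2 < [ ( ((θ_H − β_H·θ_H)/(θ_L − β_H·θ_H)) · ((I_L' − I_r1)/(I_H' − I_r1)) )^{θ_H/(θ_H − θ_L)} · exp( η_3/(β_L·(η_1 − η_3)) − (η_3/(θ_H − θ_L))·(I_H' − I_L') ) ] / (I_L' − I_r1). -/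
open Real

noncomputable def UW (η2 η3 Ir1 Ir2 θ I p : ℝ) : ℝ :=
  θ * Real.log (η2 * (I - Ir1)) + η3 * (I - Ir2) - p

noncomputable def priceL (θL η2 η3 Ir1 Ir2 IL : ℝ) : ℝ :=
  θL * Real.log (η2 * (IL - Ir1)) + η3 * (IL - Ir2)

noncomputable def priceH (θL θH η2 η3 Ir1 Ir2 IL IH : ℝ) : ℝ :=
  priceL θL η2 η3 Ir1 Ir2 IL + θH * Real.log ((IH - Ir1) / (IL - Ir1)) + η3 * (IH - IL)

noncomputable def fobj (θL θH βL βH η1 η2 η3 Ir1 Ir2 ΔC IL IH : ℝ) : ℝ :=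
  βL * (priceL θL η2 η3 Ir1 Ir2 IL - η1 * IL)
    + βH * (priceH θL θH η2 η3 Ir1 Ir2 IL IH - η1 * IH) + ΔC

noncomputable def ILstar (θL θH βL βH η1 η3 Ir1 : ℝ) : ℝ :=
  Ir1 + (θL - βH * θH) / (βL * (η1 - η3))

noncomputable def IHstar (θH η1 η3 Ir1 : ℝ) : ℝ :=
  Ir1 + θH / (η1 - η3)

noncomputable def UE (βL βH η1 ΔC pLo IL pHi IH : ℝ) : ℝ :=
  βL * (pLo - η1 * IL) + βH * (pHi - η1 * IH) + ΔC

/-! The low-type price occurs in both utilities and cancels from their difference. What remains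
is `θH` times the logarithm of a product of performance ratios, plus a term linear in the
performances, minus `(θH - θL) * log (η2 * (IL' - Ir1))`; solving for `η2` gives the threshold. -/

section

variable {θL θH βL βH η1 η2 η3 Ir1 Ir2 IL IH IL' IH' : ℝ}

theorem lt_rpow_mul_exp_iff_mul_log_lt {c d r t y : ℝ} (hd : 0 < d) (hr : 0 < r) (hy : 0 < y) :
    y < r ^ (t / d) * exp (c / d) ↔ d * log y < t * log r + c := by
  have hexp : r ^ (t / d) * exp (c / d) = exp ((t * log r + c) / d) := by
    rw [rpow_def_of_pos hr, ← exp_add]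
    ring_nf
  rw [hexp, ← log_lt_iff_lt_exp hy, lt_div_iff₀' hd]

theorem UW_priceL_sub_UW_priceH (hη2 : 0 < η2) (hIL : Ir1 < IL) (hIH : Ir1 < IH)
    (hIL' : Ir1 < IL') (hIH' : Ir1 < IH') :
    UW η2 η3 Ir1 Ir2 θL IL' (priceL θL η2 η3 Ir1 Ir2 IL)
        - UW η2 η3 Ir1 Ir2 θH IH' (priceH θL θH η2 η3 Ir1 Ir2 IL IH) =
      θH * log ((IH - Ir1) / (IL - Ir1) * ((IL' - Ir1) / (IH' - Ir1)))
        + η3 * ((IH - IL) - (IH' - IL')) - (θH - θL) * log (η2 * (IL' - Ir1)) := by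
  rw [← sub_pos] at hIL hIH hIL' hIH'
  rw [log_mul (div_pos hIH hIL).ne' (div_pos hIL' hIH').ne', log_div hIL'.ne' hIH'.ne',
    log_mul hη2.ne' hIL'.ne', UW, UW, priceH, log_mul hη2.ne' hIL'.ne', log_mul hη2.ne' hIH'.ne']
  ring

theorem stmt_0_general (hθ : θL < θH) (hη2 : 0 < η2) (hIL : Ir1 < IL) (hIH : Ir1 < IH)
    (hIL' : Ir1 < IL') (hIH' : Ir1 < IH') :
    UW η2 η3 Ir1 Ir2 θH IH' (priceH θL θH η2 η3 Ir1 Ir2 IL IH) <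
        UW η2 η3 Ir1 Ir2 θL IL' (priceL θL η2 η3 Ir1 Ir2 IL) ↔
      η2 < (((IH - Ir1) / (IL - Ir1) * ((IL' - Ir1) / (IH' - Ir1))) ^ (θH / (θH - θL))
        * exp (η3 * (IH - IL) / (θH - θL) - η3 / (θH - θL) * (IH' - IL'))) / (IL' - Ir1) := by
  have hratio : 0 < (IH - Ir1) / (IL - Ir1) * ((IL' - Ir1) / (IH' - Ir1)) :=
    mul_pos (div_pos (sub_pos.2 hIH) (sub_pos.2 hIL)) (div_pos (sub_pos.2 hIL') (sub_pos.2 hIH'))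
  have hexponent : η3 * (IH - IL) / (θH - θL) - η3 / (θH - θL) * (IH' - IL') =
      η3 * ((IH - IL) - (IH' - IL')) / (θH - θL) := by ring
  rw [← sub_pos, UW_priceL_sub_UW_priceH hη2 hIL hIH hIL' hIH', sub_pos,
    lt_div_iff₀ (sub_pos.2 hIL'), hexponent,
    lt_rpow_mul_exp_iff_mul_log_lt (sub_pos.2 hθ) hratio (mul_pos hη2 (sub_pos.2 hIL'))]

theorem lt_ILstar (hβL : 0 < βL) (hη : η3 < η1) (hmono : βH * θH < θL) :
    Ir1 < ILstar θL θH βL βH η1 η3 Ir1 :=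
  lt_add_of_pos_right _ (div_pos (sub_pos.2 hmono) (mul_pos hβL (sub_pos.2 hη)))

theorem lt_IHstar (hθH : 0 < θH) (hη : η3 < η1) : Ir1 < IHstar θH η1 η3 Ir1 :=
  lt_add_of_pos_right _ (div_pos hθH (sub_pos.2 hη))

theorem IHstar_sub_div_ILstar_sub (hβ : βL + βH = 1) (hη : η1 ≠ η3) :
    (IHstar θH η1 η3 Ir1 - Ir1) / (ILstar θL θH βL βH η1 η3 Ir1 - Ir1) =
      (θH - βH * θH) / (θL - βH * θH) := by
  have hη' : η1 - η3 ≠ 0 := sub_ne_zero.2 hη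
  obtain rfl : βL = 1 - βH := eq_sub_of_add_eq hβ
  rw [IHstar, ILstar, add_sub_cancel_left, add_sub_cancel_left]
  field_simp

theorem IHstar_sub_ILstar (hβ : βL + βH = 1) (hβL : βL ≠ 0) :
    IHstar θH η1 η3 Ir1 - ILstar θL θH βL βH η1 η3 Ir1 = (θH - θL) / (βL * (η1 - η3)) := by
  obtain rfl : βH = 1 - βL := eq_sub_of_add_eq' hβ
  rw [IHstar, ILstar, add_sub_add_left_eq_sub, ← mul_div_mul_left θH (η1 - η3) hβL, ← sub_div]
  ring_nf

end

theorem stmt_0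
    (θL θH βL βH η1 η2 η3 Ir1 Ir2 ΔC : ℝ)
    (hθL : 0 < θL) (hθ : θL < θH)
    (hβL0 : 0 < βL) (hβL1 : βL < 1)
    (hβH0 : 0 < βH) (hβH1 : βH < 1)
    (hβ : βL + βH = 1)
    (hη3 : 0 < η3) (hη13 : η3 < η1) (hη2 : 0 < η2)
    (hIr : Ir1 < Ir2)
    (hmono : βH * θH < θL)
    (IL' IH' : ℝ) (hIL' : Ir1 < IL') (hIH' : Ir1 < IH') :
    UW η2 η3 Ir1 Ir2 θH (IH') (priceH θL θH η2 η3 Ir1 Ir2 (ILstar θL θH βL βH η1 η3 Ir1) (IHstar θH η1 η3 Ir1)) <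
      UW η2 η3 Ir1 Ir2 θL (IL') (priceL θL η2 η3 Ir1 Ir2 (ILstar θL θH βL βH η1 η3 Ir1)) ↔
    η2 < ((((θH - βH * θH) / (θL - βH * θH)) * ((IL' - Ir1) / (IH' - Ir1))) ^ (θH / (θH - θL)) * Real.exp (η3 / (βL * (η1 - η3)) - η3 / (θH - θL) * (IH' - IL'))) / (IL' - Ir1) := by
  have hgap : η3 * ((θH - θL) / (βL * (η1 - η3))) / (θH - θL) = η3 / (βL * (η1 - η3)) := by
    rw [mul_div_left_comm, mul_div_cancel_left₀ _ (sub_pos.2 hθ).ne']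
  rw [stmt_0_general hθ hη2 (lt_ILstar hβL0 hη13 hmono) (lt_IHstar (hθL.trans hθ) hη13) hIL' hIH',
    IHstar_sub_div_ILstar_sub hβ hη13.ne', IHstar_sub_ILstar hβ hβL0.ne', hgap]
end

section
/- Assume additionally θ_L > β_H·θ_H. Then for every fixed I_H > I_r1, the function I_L ↦ f(I_L, I_H) has second derivative −(θ_L − β_H·θ_H)/(I_L − I_r1)^2 at every I_L > I_r1, and is strictly concave on the open interval (I_r1, ∞). -/
open Real

/-!
For fixed `IH`, the term `θH * log ((IH - Ir1) / (IL - Ir1))` of the high price contributes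
`-θH * log (IL - Ir1)`, so on `IL > Ir1` the objective is `a * log (IL - Ir1) + b * IL + d` with
`a = (βL + βH) * θL - βH * θH`. The second derivative is therefore `-a / (IL - Ir1) ^ 2`, which is
negative as soon as `a` is positive.
-/

section LogAddAffine

open scoped Topology

variable {c x : ℝ}

lemma hasDerivAt_log_sub_add_affine (a b d : ℝ) (hx : x ≠ c) :
    HasDerivAt (fun y => a * log (y - c) + b * y + d) (a * (x - c)⁻¹ + b) x := by
  have hlog : HasDerivAt (fun y => log (y - c)) (x - c)⁻¹ x := by
    simpa only [one_div] using ((hasDerivAt_id' x).sub_const c).log (sub_ne_zero.mpr hx)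
  simpa only [mul_one] using
    ((hlog.const_mul a).fun_add ((hasDerivAt_id' x).const_mul b)).add_const d

lemma hasDerivAt_deriv_log_sub_add_affine (a b d : ℝ) (hx : x ≠ c) :
    HasDerivAt (deriv fun y => a * log (y - c) + b * y + d) (-(a / (x - c) ^ 2)) x := by
  have hderiv : (deriv fun y => a * log (y - c) + b * y + d) =ᶠ[𝓝 x]
      fun y => a * (y - c)⁻¹ + b :=
    (eventually_ne_nhds hx).mono fun y hy => (hasDerivAt_log_sub_add_affine a b d hy).deriv
  have hinv : HasDerivAt (fun y => (y - c)⁻¹) (-1 / (x - c) ^ 2) x :=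
    ((hasDerivAt_id' x).sub_const c).fun_inv (sub_ne_zero.mpr hx)
  exact (((hinv.const_mul a).add_const b).congr_of_eventuallyEq hderiv).congr_deriv (by ring)

lemma strictConcaveOn_log_sub_add_affine {a : ℝ} (b c d : ℝ) (ha : 0 < a) :
    StrictConcaveOn ℝ (Set.Ioi c) fun y => a * log (y - c) + b * y + d := by
  refine strictConcaveOn_of_deriv2_neg' (convex_Ioi c)
    (fun x hx => (hasDerivAt_log_sub_add_affine a b d
      (ne_of_gt hx)).continuousAt.continuousWithinAt) fun x hx => ?_
  have hpos : 0 < x - c := sub_pos.mpr hx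
  calc deriv^[2] (fun y => a * log (y - c) + b * y + d) x
      = -(a / (x - c) ^ 2) := (hasDerivAt_deriv_log_sub_add_affine a b d (ne_of_gt hx)).deriv
    _ < 0 := neg_lt_zero.mpr (by positivity)

end LogAddAffine

section Objective

variable {η2 Ir1 IL IH : ℝ}

lemma priceL_eq_log_add_affine (θL η3 Ir2 : ℝ) (hη2 : 0 < η2) (hIL : Ir1 < IL) :
    priceL θL η2 η3 Ir1 Ir2 IL
      = θL * log (IL - Ir1) + η3 * IL + (θL * log η2 - η3 * Ir2) := by
  rw [priceL, log_mul hη2.ne' (sub_pos.mpr hIL).ne']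
  ring

lemma priceH_eq_log_add_const (θL θH η3 Ir2 : ℝ) (hη2 : 0 < η2) (hIL : Ir1 < IL)
    (hIH : Ir1 < IH) :
    priceH θL θH η2 η3 Ir1 Ir2 IL IH
      = (θL - θH) * log (IL - Ir1)
        + (θL * log η2 + θH * log (IH - Ir1) + η3 * (IH - Ir2)) := by
  rw [priceH, priceL_eq_log_add_affine θL η3 Ir2 hη2 hIL,
    log_div (sub_pos.mpr hIH).ne' (sub_pos.mpr hIL).ne']
  ring

lemma exists_eqOn_fobj_log_add_affine (θL θH βL βH η1 η3 Ir2 ΔC : ℝ) (hη2 : 0 < η2)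
    (hIH : Ir1 < IH) :
    ∃ b d, Set.EqOn (fun x => fobj θL θH βL βH η1 η2 η3 Ir1 Ir2 ΔC x IH)
      (fun x => ((βL + βH) * θL - βH * θH) * log (x - Ir1) + b * x + d) (Set.Ioi Ir1) := by
  refine ⟨βL * (η3 - η1),
    βL * (θL * log η2 - η3 * Ir2)
      + βH * (θL * log η2 + θH * log (IH - Ir1) + η3 * (IH - Ir2) - η1 * IH) + ΔC,
    fun x hx => ?_⟩
  simp only [fobj, priceL_eq_log_add_affine θL η3 Ir2 hη2 hx,
    priceH_eq_log_add_const θL θH η3 Ir2 hη2 hx hIH]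
  ring

end Objective

theorem stmt_3_general (θL θH βL βH η1 η2 η3 Ir1 Ir2 ΔC IH : ℝ) (hη2 : 0 < η2)
    (hIH : Ir1 < IH) :
    (∀ IL : ℝ, Ir1 < IL →
      HasDerivAt (deriv (fun x => fobj θL θH βL βH η1 η2 η3 Ir1 Ir2 ΔC x IH))
        (-(((βL + βH) * θL - βH * θH) / (IL - Ir1) ^ 2)) IL) ∧
    (βH * θH < (βL + βH) * θL →
      StrictConcaveOn ℝ (Set.Ioi Ir1)
        (fun x => fobj θL θH βL βH η1 η2 η3 Ir1 Ir2 ΔC x IH)) := by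
  obtain ⟨b, d, hf⟩ := exists_eqOn_fobj_log_add_affine θL θH βL βH η1 η3 Ir2 ΔC hη2 hIH
  refine ⟨fun IL hIL => ?_, fun hmono => ?_⟩
  · exact (hasDerivAt_deriv_log_sub_add_affine _ b d (ne_of_gt hIL)).congr_of_eventuallyEq
      (hf.eventuallyEq_of_mem (Ioi_mem_nhds hIL)).deriv
  · exact (strictConcaveOn_log_sub_add_affine b Ir1 d (sub_pos.mpr hmono)).congr hf.symm

theorem stmt_3
    (θL θH βL βH η1 η2 η3 Ir1 Ir2 ΔC : ℝ)
    (hθL : 0 < θL) (hθ : θL < θH)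
    (hβL0 : 0 < βL) (hβL1 : βL < 1)
    (hβH0 : 0 < βH) (hβH1 : βH < 1)
    (hβ : βL + βH = 1)
    (hη3 : 0 < η3) (hη13 : η3 < η1) (hη2 : 0 < η2)
    (hIr : Ir1 < Ir2)
    (hmono : βH * θH < θL)
    (IH : ℝ) (hIH : Ir1 < IH) :
    (∀ IL : ℝ, Ir1 < IL →
      HasDerivAt (deriv (fun x => fobj θL θH βL βH η1 η2 η3 Ir1 Ir2 ΔC (x) (IH)))
        (-((θL - βH * θH) / (IL - Ir1) ^ 2)) IL) ∧
    StrictConcaveOn ℝ (Set.Ioi Ir1) (fun x => fobj θL θH βL βH η1 η2 η3 Ir1 Ir2 ΔC (x) (IH)) := by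
  simpa only [hβ, one_mul, hmono, true_imp_iff] using
    stmt_3_general θL θH βL βH η1 η2 η3 Ir1 Ir2 ΔC IH hη2 hIH
end

section
/- Assume additionally θ_L > β_H·θ_H. Then for I_L > I_r1 and any fixed I_H > I_r1, the derivative of I_L ↦ f(I_L, I_H) vanishes at I_L if and only if I_L = I_r1 + (θ_L − β_H·θ_H)/(β_L·(η_1 − η_3)). -/
open Real

/-! The term `η3 * IL` of `priceL` cancels against the `-η3 * IL` of the price increment in `priceH`,
so for `IL > Ir1` the objective is, up to a term independent of `IL`,
`((βL + βH) * θL - βH * θH) * log (IL - Ir1) - βL * (η1 - η3) * IL`. Its derivative has the form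
`a / (IL - Ir1) - k`, which vanishes exactly when `IL = Ir1 + a / k`. -/

theorem div_sub_sub_eq_zero_iff {K : Type*} [Field K] {a c k x : K} (hk : k ≠ 0) (hx : x ≠ c) :
    a / (x - c) - k = 0 ↔ x = c + a / k := by
  rw [sub_eq_zero, div_eq_iff (sub_ne_zero.mpr hx), ← sub_eq_iff_eq_add', eq_div_iff hk,
    mul_comm k, eq_comm]

section LogAffine

variable {a c x : ℝ}

theorem hasDerivAt_log_const_mul_sub (ha : a ≠ 0) (hx : x ≠ c) :
    HasDerivAt (fun y => log (a * (y - c))) (x - c)⁻¹ x := by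
  have hsub : x - c ≠ 0 := sub_ne_zero.mpr hx
  have hlin : HasDerivAt (fun y => a * (y - c)) a x := by
    simpa only [mul_one] using ((hasDerivAt_id' x).sub_const c).const_mul a
  convert hlin.log (mul_ne_zero ha hsub) using 1
  field_simp

theorem hasDerivAt_log_const_div_sub (ha : a ≠ 0) (hx : x ≠ c) :
    HasDerivAt (fun y => log (a / (y - c))) (-(x - c)⁻¹) x := by
  have hlog_inv (y : ℝ) : log (a / (y - c)) = -log (a⁻¹ * (y - c)) := by
    rw [← Real.log_inv, mul_inv, inv_inv, div_eq_mul_inv]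
  simpa only [hlog_inv] using (hasDerivAt_log_const_mul_sub (inv_ne_zero ha) hx).fun_neg

end LogAffine

section Objective

variable {θL θH βL βH η1 η2 η3 Ir1 Ir2 ΔC IL IH : ℝ}

theorem hasDerivAt_priceL (hη2 : η2 ≠ 0) (hIL : IL ≠ Ir1) :
    HasDerivAt (priceL θL η2 η3 Ir1 Ir2) (θL / (IL - Ir1) + η3) IL := by
  have hlog := (hasDerivAt_log_const_mul_sub hη2 hIL).const_mul θL
  have hlin := ((hasDerivAt_id' IL).sub_const Ir2).const_mul η3
  exact (hlog.fun_add hlin).congr_deriv (by ring)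

theorem hasDerivAt_priceH (hη2 : η2 ≠ 0) (hIH : IH ≠ Ir1) (hIL : IL ≠ Ir1) :
    HasDerivAt (fun x => priceH θL θH η2 η3 Ir1 Ir2 x IH) ((θL - θH) / (IL - Ir1)) IL := by
  have hlog := (hasDerivAt_log_const_div_sub (sub_ne_zero.mpr hIH) hIL).const_mul θH
  have hlin := ((hasDerivAt_id' IL).const_sub IH).const_mul η3
  exact (((hasDerivAt_priceL hη2 hIL).fun_add hlog).fun_add hlin).congr_deriv (by ring)

theorem hasDerivAt_fobj (hη2 : η2 ≠ 0) (hIH : IH ≠ Ir1) (hIL : IL ≠ Ir1) :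
    HasDerivAt (fun x => fobj θL θH βL βH η1 η2 η3 Ir1 Ir2 ΔC x IH)
      (((βL + βH) * θL - βH * θH) / (IL - Ir1) - βL * (η1 - η3)) IL := by
  have hlow : HasDerivAt (fun x => priceL θL η2 η3 Ir1 Ir2 x - η1 * x)
      (θL / (IL - Ir1) + η3 - η1) IL := by
    simpa only [mul_one] using
      (hasDerivAt_priceL hη2 hIL).fun_sub ((hasDerivAt_id' IL).const_mul η1)
  have hhigh : HasDerivAt (fun x => priceH θL θH η2 η3 Ir1 Ir2 x IH - η1 * IH)
      ((θL - θH) / (IL - Ir1)) IL :=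
    (hasDerivAt_priceH hη2 hIH hIL).sub_const (η1 * IH)
  exact (((hlow.const_mul βL).fun_add (hhigh.const_mul βH)).add_const ΔC).congr_deriv (by ring)

end Objective

theorem stmt_5_general
    (θL θH βL βH η1 η2 η3 Ir1 Ir2 ΔC : ℝ)
    (hβL : βL ≠ 0) (hη13 : η1 ≠ η3) (hη2 : 0 < η2)
    (IH : ℝ) (hIH : Ir1 < IH) (IL : ℝ) (hIL : Ir1 < IL) :
    deriv (fun x => fobj θL θH βL βH η1 η2 η3 Ir1 Ir2 ΔC x IH) IL = 0 ↔
      IL = Ir1 + ((βL + βH) * θL - βH * θH) / (βL * (η1 - η3)) := by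
  rw [(hasDerivAt_fobj hη2.ne' hIH.ne' hIL.ne').deriv]
  exact div_sub_sub_eq_zero_iff (mul_ne_zero hβL (sub_ne_zero.mpr hη13)) hIL.ne'

theorem stmt_5
    (θL θH βL βH η1 η2 η3 Ir1 Ir2 ΔC : ℝ)
    (hθL : 0 < θL) (hθ : θL < θH)
    (hβL0 : 0 < βL) (hβL1 : βL < 1)
    (hβH0 : 0 < βH) (hβH1 : βH < 1)
    (hβ : βL + βH = 1)
    (hη3 : 0 < η3) (hη13 : η3 < η1) (hη2 : 0 < η2)
    (hIr : Ir1 < Ir2)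
    (hmono : βH * θH < θL)
    (IH : ℝ) (hIH : Ir1 < IH) (IL : ℝ) (hIL : Ir1 < IL) :
    deriv (fun x => fobj θL θH βL βH η1 η2 η3 Ir1 Ir2 ΔC (x) (IH)) IL = 0 ↔
      IL = Ir1 + (θL - βH * θH) / (βL * (η1 - η3)) := by
  simpa only [hβ, one_mul] using
    stmt_5_general θL θH βL βH η1 η2 η3 Ir1 Ir2 ΔC hβL0.ne' hη13.ne' hη2 IH hIH IL hIL
end

section
/- Assume additionally θ_L > β_H·θ_H. Then for any contract (p_L, I_L, p_H, I_H) with I_L, I_H > I_r1 that satisfies the IR constraints U_W(θ_L, I_L, p_L) ≥ 0 and U_W(θ_H, I_H, p_H) ≥ 0 and the IC constraints U_W(θ_L, I_L, p_L) ≥ U_W(θ_L, I_H, p_H) and U_W(θ_H, I_H, p_H) ≥ U_W(θ_H, I_L, p_L), the edge-server expected utility satisfies β_L·(p_L − η_1·I_L) + β_H·(p_H − η_1·I_H) + ΔC ≤ f(I_L*, I_H*). -/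
open Real

/-!
Individual rationality of the low type and incentive compatibility of the high type bound the
two prices by `priceL` and `priceH`. At these prices the expected utility separates into one summand
in `IL` and one in `IH`, of the form `a * log (k * (I - r)) - c * I`; each is maximized where the
marginal gain `a / (I - r)` equals the marginal cost `c`.
-/

theorem isMaxOn_mul_log_sub_mul {a c k : ℝ} (r : ℝ) (ha : 0 < a) (hc : 0 < c) (hk : k ≠ 0) :
    IsMaxOn (fun I => a * log (k * (I - r)) - c * I) (Set.Ioi r) (r + a / c) := by
  intro I hI
  have hIr : 0 < I - r := sub_pos.2 hI
  have hac : 0 < a / c := div_pos ha hc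
  have tangent : log (k * (I - r)) - log (k * (a / c)) ≤ (I - r) / (a / c) - 1 := by
    rw [← log_div (mul_ne_zero hk hIr.ne') (mul_ne_zero hk hac.ne'), mul_div_mul_left _ _ hk]
    exact log_le_sub_one_of_pos (div_pos hIr hac)
  have slope : a * ((I - r) / (a / c) - 1) = c * (I - (r + a / c)) := by
    field_simp
    ring
  have := mul_le_mul_of_nonneg_left tangent ha.le
  simp only [Set.mem_ofPred_eq, add_sub_cancel_left]
  linarith

section Contract

variable {θ θL θH βL βH η1 η2 η3 Ir1 Ir2 ΔC p pLo pHi I IL IH : ℝ}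

theorem uw_nonneg_iff_le_priceL :
    0 ≤ UW η2 η3 Ir1 Ir2 θ I p ↔ p ≤ priceL θ η2 η3 Ir1 Ir2 I :=
  sub_nonneg

theorem uw_le_uw_iff (hη2 : η2 ≠ 0) (hIL : Ir1 < IL) (hIH : Ir1 < IH) :
    UW η2 η3 Ir1 Ir2 θ IL pLo ≤ UW η2 η3 Ir1 Ir2 θ IH pHi ↔
      pHi ≤ pLo + θ * log ((IH - Ir1) / (IL - Ir1)) + η3 * (IH - IL) := by
  have hxL : IL - Ir1 ≠ 0 := (sub_pos.2 hIL).ne'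
  have hxH : IH - Ir1 ≠ 0 := (sub_pos.2 hIH).ne'
  rw [UW, UW, log_mul hη2 hxL, log_mul hη2 hxH, log_div hxH hxL]
  constructor <;> intro h <;> linarith

theorem le_priceH (hη2 : η2 ≠ 0) (hIL : Ir1 < IL) (hIH : Ir1 < IH)
    (hIRL : 0 ≤ UW η2 η3 Ir1 Ir2 θL IL pLo)
    (hICH : UW η2 η3 Ir1 Ir2 θH IL pLo ≤ UW η2 η3 Ir1 Ir2 θH IH pHi) :
    pHi ≤ priceH θL θH η2 η3 Ir1 Ir2 IL IH := by
  have hpLo := uw_nonneg_iff_le_priceL.1 hIRL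
  have hpHi := (uw_le_uw_iff hη2 hIL hIH).1 hICH
  rw [priceH]
  linarith

theorem ue_le_fobj (hβL : 0 ≤ βL) (hβH : 0 ≤ βH)
    (hpLo : pLo ≤ priceL θL η2 η3 Ir1 Ir2 IL)
    (hpHi : pHi ≤ priceH θL θH η2 η3 Ir1 Ir2 IL IH) :
    UE βL βH η1 ΔC pLo IL pHi IH ≤ fobj θL θH βL βH η1 η2 η3 Ir1 Ir2 ΔC IL IH := by
  unfold UE fobj
  gcongr

-- The high type keeps the information rent `(θH - θL) * log (η2 * (IL - Ir1))`, which lowers the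
-- coefficient of the `IL` logarithm from `βL * θL` to `θL - βH * θH`.
theorem fobj_eq_add (hβ : βL + βH = 1) (hη2 : η2 ≠ 0) (hIL : Ir1 < IL) (hIH : Ir1 < IH) :
    fobj θL θH βL βH η1 η2 η3 Ir1 Ir2 ΔC IL IH =
      ((θL - βH * θH) * log (η2 * (IL - Ir1)) - βL * (η1 - η3) * IL)
        + βH * (θH * log (η2 * (IH - Ir1)) - (η1 - η3) * IH) + (ΔC - η3 * Ir2) := by
  have hxL : IL - Ir1 ≠ 0 := (sub_pos.2 hIL).ne'
  have hxH : IH - Ir1 ≠ 0 := (sub_pos.2 hIH).ne'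
  obtain rfl : βL = 1 - βH := eq_sub_of_add_eq hβ
  rw [fobj, priceH, priceL, log_div hxH hxL, log_mul hη2 hxL, log_mul hη2 hxH]
  ring

theorem fobj_le_fobj_star (hθH : 0 < θH) (hβL : 0 < βL) (hβH : 0 ≤ βH) (hβ : βL + βH = 1)
    (hη13 : η3 < η1) (hη2 : η2 ≠ 0) (hmono : βH * θH < θL) (hIL : Ir1 < IL) (hIH : Ir1 < IH) :
    fobj θL θH βL βH η1 η2 η3 Ir1 Ir2 ΔC IL IH ≤
      fobj θL θH βL βH η1 η2 η3 Ir1 Ir2 ΔC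
        (ILstar θL θH βL βH η1 η3 Ir1) (IHstar θH η1 η3 Ir1) := by
  have hη : 0 < η1 - η3 := sub_pos.2 hη13
  have hc : 0 < βL * (η1 - η3) := mul_pos hβL hη
  have ha : 0 < θL - βH * θH := sub_pos.2 hmono
  have hILstar : Ir1 < ILstar θL θH βL βH η1 η3 Ir1 := lt_add_of_pos_right _ (div_pos ha hc)
  have hIHstar : Ir1 < IHstar θH η1 η3 Ir1 := lt_add_of_pos_right _ (div_pos hθH hη)
  rw [fobj_eq_add hβ hη2 hIL hIH, fobj_eq_add hβ hη2 hILstar hIHstar]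
  gcongr ?_ + βH * ?_ + _
  · exact isMaxOn_mul_log_sub_mul Ir1 ha hc hη2 hIL
  · exact isMaxOn_mul_log_sub_mul Ir1 hθH hη hη2 hIH

theorem stmt_8_general (hθH : 0 < θH) (hβL : 0 < βL) (hβH : 0 ≤ βH) (hβ : βL + βH = 1)
    (hη13 : η3 < η1) (hη2 : 0 < η2) (hmono : βH * θH < θL) (hIL : Ir1 < IL) (hIH : Ir1 < IH)
    (hIRL : 0 ≤ UW η2 η3 Ir1 Ir2 θL IL pLo)
    (hICH : UW η2 η3 Ir1 Ir2 θH IL pLo ≤ UW η2 η3 Ir1 Ir2 θH IH pHi) :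
    UE βL βH η1 ΔC pLo IL pHi IH ≤
      fobj θL θH βL βH η1 η2 η3 Ir1 Ir2 ΔC
        (ILstar θL θH βL βH η1 η3 Ir1) (IHstar θH η1 η3 Ir1) :=
  calc
    UE βL βH η1 ΔC pLo IL pHi IH ≤ fobj θL θH βL βH η1 η2 η3 Ir1 Ir2 ΔC IL IH :=
      ue_le_fobj hβL.le hβH (uw_nonneg_iff_le_priceL.1 hIRL) (le_priceH hη2.ne' hIL hIH hIRL hICH)
    _ ≤ _ := fobj_le_fobj_star hθH hβL hβH hβ hη13 hη2.ne' hmono hIL hIH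

end Contract

theorem stmt_8
    (θL θH βL βH η1 η2 η3 Ir1 Ir2 ΔC : ℝ)
    (hθL : 0 < θL) (hθ : θL < θH)
    (hβL0 : 0 < βL) (hβL1 : βL < 1)
    (hβH0 : 0 < βH) (hβH1 : βH < 1)
    (hβ : βL + βH = 1)
    (hη3 : 0 < η3) (hη13 : η3 < η1) (hη2 : 0 < η2)
    (hIr : Ir1 < Ir2)
    (hmono : βH * θH < θL)
    (pLo IL pHi IH : ℝ) (hIL : Ir1 < IL) (hIH : Ir1 < IH)
    (hIRL : 0 ≤ UW η2 η3 Ir1 Ir2 θL (IL) (pLo))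
    (hIRH : 0 ≤ UW η2 η3 Ir1 Ir2 θH (IH) (pHi))
    (hICL : UW η2 η3 Ir1 Ir2 θL (IH) (pHi) ≤ UW η2 η3 Ir1 Ir2 θL (IL) (pLo))
    (hICH : UW η2 η3 Ir1 Ir2 θH (IL) (pLo) ≤ UW η2 η3 Ir1 Ir2 θH (IH) (pHi)) :
    βL * (pLo - η1 * IL) + βH * (pHi - η1 * IH) + ΔC ≤ fobj θL θH βL βH η1 η2 η3 Ir1 Ir2 ΔC (ILstar θL θH βL βH η1 η3 Ir1) (IHstar θH η1 η3 Ir1) := by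
  exact stmt_8_general (hθL.trans hθ) hβL0 hβH0.le hβ hη13 hη2 hmono hIL hIH hIRL hICH
end

section
/- Binding of the low-type IR constraint at the optimum: let (p_L, I_L, p_H, I_H) be a contract with I_L, I_H > I_r1 and η_2·(I_L − I_r1) ≥ 1 that satisfies IR and IC, and suppose U_W(θ_L, I_L, p_L) > 0. Then for every δ with 0 < δ ≤ U_W(θ_L, I_L, p_L), the contract (p_L + δ, I_L, p_H + δ, I_H) also satisfies IR and IC and yields strictly larger edge-server expected utility; consequently no contract with strict low-type IR can maximize the edge-server expected utility over IR- and IC-feasible contracts. -/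
open Real

/-!
Raising both prices by `δ` costs every type exactly `δ`, whichever item it takes, so all incentive
comparisons survive and the edge server gains `(βL + βH) * δ`. Only individual rationality could
break. The low type has slack `UW θL IL pLo ≥ δ`. The high type could take the low item, which it
values at least as much as the low type does because the logarithm is nonnegative there, so by
incentive compatibility its utility is never below that of the low type.
-/

section Screening

variable {Q : Type*} {uL uH : Q → ℝ → ℝ} {pL pH : ℝ} {qL qH : Q}

/-- A utility `u q p` of buying quality `q` at price `p` is quasilinear if it has the form
`v q - p`; this is encoded without naming the valuation `v`, by the effect of a price change. -/
def IsQuasilinear (u : Q → ℝ → ℝ) : Prop :=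
  ∀ q p δ, u q (p + δ) = u q p - δ

/-- Incentive compatibility of a two-item contract: each of the buyers with utilities `uL` and `uH`
weakly prefers the item designed for it. -/
structure IsIncentiveCompatible (uL uH : Q → ℝ → ℝ) (pL : ℝ) (qL : Q) (pH : ℝ) (qH : Q) :
    Prop where
  low : uL qH pH ≤ uL qL pL
  high : uH qL pL ≤ uH qH pH

/-- Individual rationality of a two-item contract: each of the buyers with utilities `uL` and `uH`
weakly prefers the item designed for it to not buying, which has utility `0`. -/
structure IsIndividuallyRational (uL uH : Q → ℝ → ℝ) (pL : ℝ) (qL : Q) (pH : ℝ) (qH : Q) :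
    Prop where
  low : 0 ≤ uL qL pL
  high : 0 ≤ uH qH pH

namespace IsIncentiveCompatible

lemma add_price (h : IsIncentiveCompatible uL uH pL qL pH qH)
    (huL : IsQuasilinear uL) (huH : IsQuasilinear uH) (δ : ℝ) :
    IsIncentiveCompatible uL uH (pL + δ) qL (pH + δ) qH where
  low := by simpa only [huL _ _ δ] using sub_le_sub_right h.low δ
  high := by simpa only [huH _ _ δ] using sub_le_sub_right h.high δ

lemma isIndividuallyRational (h : IsIncentiveCompatible uL uH pL qL pH qH)
    (hLH : uL qL pL ≤ uH qL pL) (hlow : 0 ≤ uL qL pL) :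
    IsIndividuallyRational uL uH pL qL pH qH where
  low := hlow
  high := calc
    0 ≤ uL qL pL := hlow
    _ ≤ uH qL pL := hLH
    _ ≤ uH qH pH := h.high

lemma isIndividuallyRational_add_price (h : IsIncentiveCompatible uL uH pL qL pH qH)
    (huL : IsQuasilinear uL) (huH : IsQuasilinear uH) (hLH : uL qL pL ≤ uH qL pL)
    {δ : ℝ} (hδ : δ ≤ uL qL pL) :
    IsIndividuallyRational uL uH (pL + δ) qL (pH + δ) qH := by
  refine (h.add_price huL huH δ).isIndividuallyRational ?_ ?_
  · simpa only [huL _ _ δ, huH _ _ δ] using sub_le_sub_right hLH δ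
  · simpa only [huL _ _ δ] using sub_nonneg.mpr hδ

end IsIncentiveCompatible

end Screening

lemma isQuasilinear_UW (η2 η3 Ir1 Ir2 θ : ℝ) : IsQuasilinear (UW η2 η3 Ir1 Ir2 θ) := by
  intro I p δ
  unfold UW
  ring

lemma UW_le_UW_of_type_le {η2 Ir1 θ θ' I : ℝ} (η3 Ir2 p : ℝ) (hθ : θ ≤ θ')
    (hscale : 1 ≤ η2 * (I - Ir1)) :
    UW η2 η3 Ir1 Ir2 θ I p ≤ UW η2 η3 Ir1 Ir2 θ' I p := by
  have hlog : 0 ≤ Real.log (η2 * (I - Ir1)) := Real.log_nonneg hscale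
  unfold UW
  gcongr

lemma UE_add_price (βL βH η1 ΔC pLo IL pHi IH δ : ℝ) :
    UE βL βH η1 ΔC (pLo + δ) IL (pHi + δ) IH =
      UE βL βH η1 ΔC pLo IL pHi IH + (βL + βH) * δ := by
  unfold UE
  ring

theorem stmt_12_general {uL uH : ℝ → ℝ → ℝ} (huL : IsQuasilinear uL) (huH : IsQuasilinear uH)
    {βL βH : ℝ} (hβ : 0 < βL + βH) (η1 ΔC : ℝ)
    {Ir1 pLo IL pHi IH : ℝ} (hIL : Ir1 < IL) (hIH : Ir1 < IH)
    (hLH : uL IL pLo ≤ uH IL pLo) (hIC : IsIncentiveCompatible uL uH pLo IL pHi IH)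
    (hstrict : 0 < uL IL pLo) :
    (∀ δ : ℝ, 0 < δ → δ ≤ uL IL pLo →
      (0 ≤ uL IL (pLo + δ) ∧ 0 ≤ uH IH (pHi + δ) ∧
       uL IH (pHi + δ) ≤ uL IL (pLo + δ) ∧ uH IL (pLo + δ) ≤ uH IH (pHi + δ) ∧
       UE βL βH η1 ΔC pLo IL pHi IH < UE βL βH η1 ΔC (pLo + δ) IL (pHi + δ) IH)) ∧
    (∃ qLo JL qHi JH : ℝ, Ir1 < JL ∧ Ir1 < JH ∧
      (0 ≤ uL JL qLo ∧ 0 ≤ uH JH qHi ∧ uL JH qHi ≤ uL JL qLo ∧ uH JL qLo ≤ uH JH qHi) ∧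
      UE βL βH η1 ΔC pLo IL pHi IH < UE βL βH η1 ΔC qLo JL qHi JH) := by
  have hIC_shift (δ : ℝ) := hIC.add_price huL huH δ
  have hIR_shift {δ : ℝ} (hδ : δ ≤ uL IL pLo) :=
    hIC.isIndividuallyRational_add_price huL huH hLH hδ
  have hUE_shift {δ : ℝ} (hδ : 0 < δ) :
      UE βL βH η1 ΔC pLo IL pHi IH < UE βL βH η1 ΔC (pLo + δ) IL (pHi + δ) IH := by
    rw [UE_add_price]
    exact lt_add_of_pos_right _ (mul_pos hβ hδ)
  refine ⟨fun δ hδ hδ_le ↦ ?_, pLo + uL IL pLo, IL, pHi + uL IL pLo, IH, hIL, hIH, ?_, ?_⟩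
  · exact ⟨(hIR_shift hδ_le).low, (hIR_shift hδ_le).high, (hIC_shift δ).low, (hIC_shift δ).high,
      hUE_shift hδ⟩
  · exact ⟨(hIR_shift le_rfl).low, (hIR_shift le_rfl).high, (hIC_shift _).low, (hIC_shift _).high⟩
  · exact hUE_shift hstrict

theorem stmt_12
    (θL θH βL βH η1 η2 η3 Ir1 Ir2 ΔC : ℝ)
    (hθL : 0 < θL) (hθ : θL < θH)
    (hβL0 : 0 < βL) (hβL1 : βL < 1)
    (hβH0 : 0 < βH) (hβH1 : βH < 1)
    (hβ : βL + βH = 1)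
    (hη3 : 0 < η3) (hη13 : η3 < η1) (hη2 : 0 < η2)
    (hIr : Ir1 < Ir2)
    (pLo IL pHi IH : ℝ) (hIL : Ir1 < IL) (hIH : Ir1 < IH)
    (hscale : 1 ≤ η2 * (IL - Ir1))
    (hIRL : 0 ≤ UW η2 η3 Ir1 Ir2 θL (IL) (pLo))
    (hIRH : 0 ≤ UW η2 η3 Ir1 Ir2 θH (IH) (pHi))
    (hICL : UW η2 η3 Ir1 Ir2 θL (IH) (pHi) ≤ UW η2 η3 Ir1 Ir2 θL (IL) (pLo))
    (hICH : UW η2 η3 Ir1 Ir2 θH (IL) (pLo) ≤ UW η2 η3 Ir1 Ir2 θH (IH) (pHi))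
    (hstrict : 0 < UW η2 η3 Ir1 Ir2 θL (IL) (pLo)) :
    (∀ δ : ℝ, 0 < δ → δ ≤ UW η2 η3 Ir1 Ir2 θL (IL) (pLo) →
      (0 ≤ UW η2 η3 Ir1 Ir2 θL (IL) (pLo + δ) ∧ 0 ≤ UW η2 η3 Ir1 Ir2 θH (IH) (pHi + δ) ∧
       UW η2 η3 Ir1 Ir2 θL (IH) (pHi + δ) ≤ UW η2 η3 Ir1 Ir2 θL (IL) (pLo + δ) ∧
       UW η2 η3 Ir1 Ir2 θH (IL) (pLo + δ) ≤ UW η2 η3 Ir1 Ir2 θH (IH) (pHi + δ) ∧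
       UE βL βH η1 ΔC (pLo) (IL) (pHi) (IH) < UE βL βH η1 ΔC (pLo + δ) (IL) (pHi + δ) (IH))) ∧
    (∃ qLo JL qHi JH : ℝ, Ir1 < JL ∧ Ir1 < JH ∧
      (0 ≤ UW η2 η3 Ir1 Ir2 θL (JL) (qLo) ∧ 0 ≤ UW η2 η3 Ir1 Ir2 θH (JH) (qHi) ∧
       UW η2 η3 Ir1 Ir2 θL (JH) (qHi) ≤ UW η2 η3 Ir1 Ir2 θL (JL) (qLo) ∧
       UW η2 η3 Ir1 Ir2 θH (JL) (qLo) ≤ UW η2 η3 Ir1 Ir2 θH (JH) (qHi)) ∧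
      UE βL βH η1 ΔC (pLo) (IL) (pHi) (IH) < UE βL βH η1 ΔC (qLo) (JL) (qHi) (JH)) :=
  stmt_12_general (isQuasilinear_UW _ _ _ _ _) (isQuasilinear_UW _ _ _ _ _) (add_pos hβL0 hβH0)
    η1 ΔC hIL hIH (UW_le_UW_of_type_le _ _ _ hθ.le hscale) ⟨hICL, hICH⟩ hstrict
end

section
/- Binding of the high-type IC constraint at the optimum: let (p_L, I_L, p_H, I_H) be a contract with I_L, I_H > I_r1 and η_2·(I_L − I_r1) ≥ 1 that satisfies IR and IC, and suppose U_W(θ_H, I_H, p_H) > U_W(θ_H, I_L, p_L). Then for every δ with 0 < δ ≤ U_W(θ_H, I_H, p_H) − U_W(θ_H, I_L, p_L), the contract (p_L, I_L, p_H + δ, I_H) also satisfies IR and IC and yields strictly larger edge-server expected utility; consequently no contract with strict high-type IC can maximize the edge-server expected utility over IR- and IC-feasible contracts. -/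
open Real

/-! Raising the high-type price makes the high offer less attractive to the low type and leaves the
low offer alone, so only the high type's constraints are at risk. Its IC constraint survives while
the increase stays within the slack, and then its IR constraint follows by comparison with the low
offer: the high type values that offer at least as much as the low type, who accepts it. -/

section Screening

variable {X R : Type*} [AddCommGroup R] [PartialOrder R] [IsOrderedAddMonoid R]
  {vL vH : X → R} {pL pH δ : R} {xL xH : X}

/-- Individual rationality and incentive compatibility of a contract offering `xL` at price `pL`
and `xH` at price `pH` to a low and a high type with valuations `vL` and `vH`. Payoffs are
quasi-linear (`v x - p`), and the outside option has payoff `0`. -/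
def IsFeasibleContract (vL vH : X → R) (pL : R) (xL : X) (pH : R) (xH : X) : Prop :=
  (0 ≤ vL xL - pL ∧ 0 ≤ vH xH - pH) ∧
    (vL xH - pH ≤ vL xL - pL ∧ vH xL - pL ≤ vH xH - pH)

theorem isFeasibleContract_of_low_ir (hv : vL xL ≤ vH xL) (hIRL : 0 ≤ vL xL - pL)
    (hICL : vL xH - pH ≤ vL xL - pL) (hICH : vH xL - pL ≤ vH xH - pH) :
    IsFeasibleContract vL vH pL xL pH xH := by
  have hIRH : 0 ≤ vH xH - pH :=
    calc
      0 ≤ vL xL - pL := hIRL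
      _ ≤ vH xL - pL := sub_le_sub_right hv pL
      _ ≤ vH xH - pH := hICH
  exact ⟨⟨hIRL, hIRH⟩, hICL, hICH⟩

theorem isFeasibleContract_add_highPrice (hv : vL xL ≤ vH xL) (hIRL : 0 ≤ vL xL - pL)
    (hICL : vL xH - pH ≤ vL xL - pL) (hδ : 0 ≤ δ)
    (hδ_slack : δ ≤ (vH xH - pH) - (vH xL - pL)) :
    IsFeasibleContract vL vH pL xL (pH + δ) xH := by
  apply isFeasibleContract_of_low_ir hv hIRL
  · calc
      vL xH - (pH + δ) ≤ vL xH - pH := sub_le_sub_left (le_add_of_nonneg_right hδ) _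
      _ ≤ vL xL - pL := hICL
  · rw [← sub_sub]
    exact le_sub_comm.mp hδ_slack

theorem stmt_13_general {S : Type*} [Preorder S] {s : Set X} {profit : R → X → R → X → S}
    (hprofit : StrictMono fun p ↦ profit pL xL p xH) (hxL : xL ∈ s) (hxH : xH ∈ s)
    (hv : vL xL ≤ vH xL) (hIRL : 0 ≤ vL xL - pL) (hICL : vL xH - pH ≤ vL xL - pL)
    (hstrict : vH xL - pL < vH xH - pH) :
    (∀ δ : R, 0 < δ → δ ≤ (vH xH - pH) - (vH xL - pL) →
      IsFeasibleContract vL vH pL xL (pH + δ) xH ∧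
        profit pL xL pH xH < profit pL xL (pH + δ) xH) ∧
    ∃ qL yL qH yH, yL ∈ s ∧ yH ∈ s ∧ IsFeasibleContract vL vH qL yL qH yH ∧
      profit pL xL pH xH < profit qL yL qH yH := by
  have improve (δ : R) (hδ : 0 < δ) (hδ_slack : δ ≤ (vH xH - pH) - (vH xL - pL)) :
      IsFeasibleContract vL vH pL xL (pH + δ) xH ∧
        profit pL xL pH xH < profit pL xL (pH + δ) xH :=
    ⟨isFeasibleContract_add_highPrice hv hIRL hICL hδ.le hδ_slack,
      hprofit (lt_add_of_pos_right pH hδ)⟩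
  exact ⟨improve, pL, xL, _, xH, hxL, hxH, improve _ (sub_pos.mpr hstrict) le_rfl⟩

end Screening

-- Despite its name, `priceL` gives the willingness to pay of whichever type it is applied to.
theorem UW_eq_priceL_sub (η2 η3 Ir1 Ir2 θ I p : ℝ) :
    UW η2 η3 Ir1 Ir2 θ I p = priceL θ η2 η3 Ir1 Ir2 I - p :=
  rfl

theorem priceL_monotone_type {η2 Ir1 I : ℝ} (η3 Ir2 : ℝ) (hscale : 1 ≤ η2 * (I - Ir1)) :
    Monotone fun θ ↦ priceL θ η2 η3 Ir1 Ir2 I := fun _ _ hθ ↦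
  add_le_add_left (mul_le_mul_of_nonneg_right hθ (log_nonneg hscale)) _

theorem UE_strictMono_highPrice {βH : ℝ} (hβH : 0 < βH) (βL η1 ΔC pL IL IH : ℝ) :
    StrictMono fun pH ↦ UE βL βH η1 ΔC pL IL pH IH := fun _ _ hp ↦ by
  simp only [UE]
  gcongr

theorem stmt_13
    (θL θH βL βH η1 η2 η3 Ir1 Ir2 ΔC : ℝ)
    (hθL : 0 < θL) (hθ : θL < θH)
    (hβL0 : 0 < βL) (hβL1 : βL < 1)
    (hβH0 : 0 < βH) (hβH1 : βH < 1)
    (hβ : βL + βH = 1)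
    (hη3 : 0 < η3) (hη13 : η3 < η1) (hη2 : 0 < η2)
    (hIr : Ir1 < Ir2)
    (pLo IL pHi IH : ℝ) (hIL : Ir1 < IL) (hIH : Ir1 < IH)
    (hscale : 1 ≤ η2 * (IL - Ir1))
    (hIRL : 0 ≤ UW η2 η3 Ir1 Ir2 θL (IL) (pLo))
    (hIRH : 0 ≤ UW η2 η3 Ir1 Ir2 θH (IH) (pHi))
    (hICL : UW η2 η3 Ir1 Ir2 θL (IH) (pHi) ≤ UW η2 η3 Ir1 Ir2 θL (IL) (pLo))
    (hICH : UW η2 η3 Ir1 Ir2 θH (IL) (pLo) ≤ UW η2 η3 Ir1 Ir2 θH (IH) (pHi))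
    (hstrict : UW η2 η3 Ir1 Ir2 θH (IL) (pLo) < UW η2 η3 Ir1 Ir2 θH (IH) (pHi)) :
    (∀ δ : ℝ, 0 < δ →
      δ ≤ UW η2 η3 Ir1 Ir2 θH (IH) (pHi) - UW η2 η3 Ir1 Ir2 θH (IL) (pLo) →
      (0 ≤ UW η2 η3 Ir1 Ir2 θL (IL) (pLo) ∧ 0 ≤ UW η2 η3 Ir1 Ir2 θH (IH) (pHi + δ) ∧
       UW η2 η3 Ir1 Ir2 θL (IH) (pHi + δ) ≤ UW η2 η3 Ir1 Ir2 θL (IL) (pLo) ∧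
       UW η2 η3 Ir1 Ir2 θH (IL) (pLo) ≤ UW η2 η3 Ir1 Ir2 θH (IH) (pHi + δ) ∧
       UE βL βH η1 ΔC (pLo) (IL) (pHi) (IH) < UE βL βH η1 ΔC (pLo) (IL) (pHi + δ) (IH))) ∧
    (∃ qLo JL qHi JH : ℝ, Ir1 < JL ∧ Ir1 < JH ∧
      (0 ≤ UW η2 η3 Ir1 Ir2 θL (JL) (qLo) ∧ 0 ≤ UW η2 η3 Ir1 Ir2 θH (JH) (qHi) ∧
       UW η2 η3 Ir1 Ir2 θL (JH) (qHi) ≤ UW η2 η3 Ir1 Ir2 θL (JL) (qLo) ∧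
       UW η2 η3 Ir1 Ir2 θH (JL) (qLo) ≤ UW η2 η3 Ir1 Ir2 θH (JH) (qHi)) ∧
      UE βL βH η1 ΔC (pLo) (IL) (pHi) (IH) < UE βL βH η1 ΔC (qLo) (JL) (qHi) (JH)) := by
  simpa only [UW_eq_priceL_sub, IsFeasibleContract, and_assoc, Set.mem_Ioi] using
    stmt_13_general (s := Set.Ioi Ir1) (UE_strictMono_highPrice hβH0 βL η1 ΔC pLo IL IH) hIL hIH
      (priceL_monotone_type η3 Ir2 hscale hθ.le) hIRL hICL hstrict
end
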